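/- Let P ⊆ ℝⁿ be a convex body containing 0 in its interior. For every δ ∈ (0,1) there exists a constant C_δ such that for every convex function φ : ℝⁿ → ℝ with φ − φ_P bounded on ℝⁿ, φ ≥ 0 everywhere and φ(0) = 0, the inequality log ∫_{ℝⁿ} e^{−φ(x)} dx ≤ (δ / vol(P)) · ∫_P φ*(p) dp + C_δ holds, where vol(P) denotes the Lebesgue measure of P. -/

import Mathlib

open scoped InnerProductSpace
open MeasureTheory

/-- The support function `φ_P(x) = sup_{p ∈ P} ⟨x, p⟫` of a set `P`. -/
noncomputable def suppFn {n : ℕ} (P : Set (EuclideanSpace ℝ (Fin n)))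
    (x : EuclideanSpace ℝ (Fin n)) : ℝ :=
  ⨆ p : P, ⟪x, (p : EuclideanSpace ℝ (Fin n))⟫_ℝ

/-- The (real-valued) Legendre transform `φ*(p) = sup_x (⟨p, x⟩ - φ(x))`. -/
noncomputable def legendre {n : ℕ} (φ : EuclideanSpace ℝ (Fin n) → ℝ)
    (p : EuclideanSpace ℝ (Fin n)) : ℝ :=
  ⨆ x, (⟪p, x⟫_ℝ - φ x)

/-- The Legendre transform with values in `ℝ ∪ {+∞}` (as a sup of real numbers
over a nonempty index it never takes the value `-∞`). -/
noncomputable def legendreE {n : ℕ} (φ : EuclideanSpace ℝ (Fin n) → ℝ)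
    (p : EuclideanSpace ℝ (Fin n)) : EReal :=
  ⨆ x, ((⟪p, x⟫_ℝ - φ x : ℝ) : EReal)

/-!
The integral of `φ*` over `P` controls the coercivity of `φ`. Suppose `P` contains the ball of
radius `3r` about `0`. Given `x`, on the ball of radius `r` centred at `2r x / ‖x‖` one has
`⟪p, x⟫ ≥ r‖x‖`, hence `φ*(p) ≥ r‖x‖ - φ x`; integrating over this ball, of volume `v` say, gives
`φ x ≥ r‖x‖ - v⁻¹ ∫_P φ*`. Since `φ ≥ 0`, for `θ ∈ (0, 1]` one may replace `φ` by `θφ ≤ φ`, so that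
`∫ e^{-φ} ≤ e^{θ v⁻¹ ∫_P φ*} ∫ e^{-θ r‖x‖}`. A small `θ` makes the coefficient of `∫_P φ*` as small
as desired, at the cost of the constant `log ∫ e^{-θ r‖x‖}`.
-/

theorem exp_neg_le_exp_mul_exp_neg_of_sub_le {θ a b y : ℝ} (hθ0 : 0 ≤ θ) (hθ1 : θ ≤ 1)
    (hy : 0 ≤ y) (hab : a - b ≤ y) :
    Real.exp (-y) ≤ Real.exp (θ * b) * Real.exp (-(θ * a)) := by
  rw [← Real.exp_add, Real.exp_le_exp]
  calc -y ≤ -(θ * y) := neg_le_neg (mul_le_of_le_one_left hy hθ1)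
    _ ≤ -(θ * (a - b)) := neg_le_neg (mul_le_mul_of_nonneg_left hab hθ0)
    _ = θ * b + -(θ * a) := by ring

section CoerciveFunctions

variable {E : Type*} [NormedAddCommGroup E] [NormedSpace ℝ E] [FiniteDimensional ℝ E]
  [MeasurableSpace E] [BorelSpace E] (μ : Measure E) [μ.IsAddHaarMeasure]

open Filter in
theorem integrable_exp_neg_mul_norm {c : ℝ} (hc : 0 < c) :
    Integrable (fun x : E ↦ Real.exp (-(c * ‖x‖))) μ := by
  set s : ℝ := Module.finrank ℝ E + 1
  have hcont : Continuous fun x : E ↦ Real.exp (-(c * ‖x‖)) := by fun_prop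
  have hshift : Tendsto (fun x : E ↦ 1 + ‖x‖) (cocompact E) atTop :=
    tendsto_atTop_add_const_left _ _ (tendsto_norm_cocompact_atTop (E := E))
  have hdecay : (fun x : E ↦ Real.exp (-c * (1 + ‖x‖))) =O[cocompact E]
      fun x ↦ (1 + ‖x‖) ^ (-s) :=
    ((isLittleO_exp_neg_mul_rpow_atTop hc (-s)).comp_tendsto hshift).isBigO
  have hfactor (x : E) :
      Real.exp (-(c * ‖x‖)) = Real.exp c * Real.exp (-c * (1 + ‖x‖)) := by
    rw [← Real.exp_add]
    ring_nf
  exact hcont.locallyIntegrable.integrable_of_isBigO_cocompact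
    ((hdecay.const_mul_left (Real.exp c)).congr_left fun x ↦ (hfactor x).symm)
    (integrable_one_add_norm (lt_add_one _) |>.integrableAtFilter _)

theorem log_integral_exp_neg_le_of_mul_norm_sub_le {φ : E → ℝ} {a b θ : ℝ}
    (hφ : AEMeasurable φ μ) (ha : 0 < a) (hθ0 : 0 < θ) (hθ1 : θ ≤ 1)
    (hnonneg : ∀ x, 0 ≤ φ x) (hcoercive : ∀ x, a * ‖x‖ - b ≤ φ x) :
    Real.log (∫ x, Real.exp (-φ x) ∂μ) ≤
      θ * b + Real.log (∫ x, Real.exp (-(θ * a * ‖x‖)) ∂μ) := by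
  have hint : Integrable (fun x : E ↦ Real.exp (-(θ * a * ‖x‖))) μ :=
    integrable_exp_neg_mul_norm μ (mul_pos hθ0 ha)
  have hle (x : E) :
      Real.exp (-φ x) ≤ Real.exp (θ * b) * Real.exp (-(θ * a * ‖x‖)) := by
    rw [mul_assoc]
    exact exp_neg_le_exp_mul_exp_neg_of_sub_le hθ0.le hθ1 (hnonneg x) (hcoercive x)
  have hintφ : Integrable (fun x ↦ Real.exp (-φ x)) μ :=
    (hint.const_mul (Real.exp (θ * b))).mono' hφ.neg.exp.aestronglyMeasurable
      (.of_forall fun x ↦ by simpa only [Real.norm_eq_abs, Real.abs_exp] using hle x)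
  calc Real.log (∫ x, Real.exp (-φ x) ∂μ)
      ≤ Real.log (Real.exp (θ * b) * ∫ x, Real.exp (-(θ * a * ‖x‖)) ∂μ) := by
        rw [← integral_const_mul]
        exact Real.log_le_log (integral_exp_pos hintφ)
          (integral_mono hintφ (hint.const_mul _) hle)
    _ = θ * b + Real.log (∫ x, Real.exp (-(θ * a * ‖x‖)) ∂μ) := by
        rw [Real.log_mul (Real.exp_pos _).ne' (integral_exp_pos hint).ne', Real.log_exp]

end CoerciveFunctions

theorem measureReal_ball_pos {X : Type*} [PseudoMetricSpace X] [ProperSpace X] [MeasurableSpace X]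
    (μ : Measure X) [μ.IsOpenPosMeasure] [IsFiniteMeasureOnCompacts μ] {x : X} {r : ℝ}
    (hr : 0 < r) : 0 < μ.real (Metric.ball x r) :=
  ENNReal.toReal_pos (Metric.measure_ball_pos μ x hr).ne' measure_ball_lt_top.ne

section BallInDirection

variable {E : Type*} [NormedAddCommGroup E]

open Metric

theorem ball_smul_inv_norm_subset [NormedSpace ℝ E] {r : ℝ} (hr : 0 ≤ r) (x : E) :
    ball ((2 * r) • ‖x‖⁻¹ • x) r ⊆ ball 0 (3 * r) := by
  have hunit : ‖‖x‖⁻¹ • x‖ ≤ 1 := by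
    rw [norm_smul, norm_inv, norm_norm]
    exact inv_mul_le_one
  refine ball_subset_ball' ?_
  rw [dist_zero_right, norm_smul, Real.norm_of_nonneg (by positivity)]
  linarith [mul_le_of_le_one_right (by positivity : 0 ≤ 2 * r) hunit]

theorem mul_norm_le_inner_of_mem_ball [InnerProductSpace ℝ E] {r : ℝ} {x p : E}
    (hp : p ∈ ball ((2 * r) • ‖x‖⁻¹ • x) r) : r * ‖x‖ ≤ ⟪p, x⟫_ℝ := by
  set c := (2 * r) • ‖x‖⁻¹ • x with hc
  have hcenter : ⟪c, x⟫_ℝ = 2 * r * ‖x‖ := by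
    rw [hc, real_inner_smul_left, real_inner_smul_left, real_inner_self_eq_norm_mul_norm,
      ← mul_assoc ‖x‖⁻¹, inv_mul_mul_self]
  have hdev : -(r * ‖x‖) ≤ ⟪p - c, x⟫_ℝ := by
    refine (abs_le.1 ((abs_real_inner_le_norm _ _).trans ?_)).1
    exact mul_le_mul_of_nonneg_right (mem_ball_iff_norm.1 hp).le (norm_nonneg x)
  rw [inner_sub_left] at hdev
  linarith

end BallInDirection

section Legendre

variable {n : ℕ} {P : Set (EuclideanSpace ℝ (Fin n))} {φ : EuclideanSpace ℝ (Fin n) → ℝ}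
  {p : EuclideanSpace ℝ (Fin n)} {M : ℝ}

/-- The effective domain `{φ* < ∞}` of the Legendre transform. Outside it the real-valued
`legendre φ` takes the junk value `0`. -/
def legendreDomain (φ : EuclideanSpace ℝ (Fin n) → ℝ) : Set (EuclideanSpace ℝ (Fin n)) :=
  {p | BddAbove (Set.range fun x ↦ ⟪p, x⟫_ℝ - φ x)}

theorem mem_legendreDomain_of_inner_sub_le (h : ∀ x, ⟪p, x⟫_ℝ - φ x ≤ M) :
    p ∈ legendreDomain φ :=
  ⟨M, Set.forall_mem_range.2 h⟩

theorem legendre_le_of_inner_sub_le (h : ∀ x, ⟪p, x⟫_ℝ - φ x ≤ M) : legendre φ p ≤ M :=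
  ciSup_le h

theorem inner_sub_le_legendre (hp : p ∈ legendreDomain φ) (x : EuclideanSpace ℝ (Fin n)) :
    ⟪p, x⟫_ℝ - φ x ≤ legendre φ p :=
  le_ciSup hp x

theorem neg_apply_zero_le_legendre (hp : p ∈ legendreDomain φ) : -φ 0 ≤ legendre φ p := by
  simpa only [inner_zero_right, zero_sub] using inner_sub_le_legendre hp 0

theorem inner_le_suppFn (hP : Bornology.IsBounded P) (hp : p ∈ P)
    (x : EuclideanSpace ℝ (Fin n)) : ⟪x, p⟫_ℝ ≤ suppFn P x := by
  obtain ⟨R, hR⟩ := hP.exists_norm_le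
  have hbdd : BddAbove (Set.range fun q : P ↦ ⟪x, (q : EuclideanSpace ℝ (Fin n))⟫_ℝ) := by
    refine ⟨‖x‖ * R, Set.forall_mem_range.2 fun q ↦ (real_inner_le_norm _ _).trans ?_⟩
    exact mul_le_mul_of_nonneg_left (hR q q.2) (norm_nonneg x)
  exact le_ciSup hbdd ⟨p, hp⟩

theorem inner_sub_le_of_suppFn_sub_le (hP : Bornology.IsBounded P)
    (hφ : ∀ x, suppFn P x - M ≤ φ x) (hp : p ∈ P) (x : EuclideanSpace ℝ (Fin n)) :
    ⟪p, x⟫_ℝ - φ x ≤ M := by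
  have hsupp := inner_le_suppFn hP hp x
  rw [real_inner_comm] at hsupp
  linarith [hφ x]

theorem aemeasurable_restrict_legendre (hP : MeasurableSet P) (hdom : P ⊆ legendreDomain φ)
    (μ : Measure (EuclideanSpace ℝ (Fin n))) : AEMeasurable (legendre φ) (μ.restrict P) := by
  have hlsc : LowerSemicontinuous fun p : P ↦ legendre φ p :=
    lowerSemicontinuous_ciSup (fun p ↦ hdom p.2) fun x ↦
      Continuous.lowerSemicontinuous (by fun_prop)
  exact aemeasurable_restrict_of_measurable_subtype hP hlsc.measurable

theorem integrableOn_legendre {μ : Measure (EuclideanSpace ℝ (Fin n))} (hP : MeasurableSet P)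
    (hμP : μ P ≠ ⊤) (hM : ∀ p ∈ P, ∀ x, ⟪p, x⟫_ℝ - φ x ≤ M) :
    IntegrableOn (legendre φ) P μ := by
  have hdom : P ⊆ legendreDomain φ := fun p hp ↦ mem_legendreDomain_of_inner_sub_le (hM p hp)
  refine (integrableOn_const (C := max M (φ 0)) hμP).mono'
    (aemeasurable_restrict_legendre hP hdom μ).aestronglyMeasurable ?_
  filter_upwards [ae_restrict_mem hP] with p hp
  refine abs_le.2 ⟨?_, (legendre_le_of_inner_sub_le (hM p hp)).trans (le_max_left _ _)⟩
  exact (neg_le_neg (le_max_right _ _)).trans (neg_apply_zero_le_legendre (hdom hp))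

open Metric in
theorem mul_norm_sub_setIntegral_legendre_div_le {μ : Measure (EuclideanSpace ℝ (Fin n))}
    [μ.IsAddHaarMeasure] {r : ℝ} (hr : 0 < r) (hball : ball 0 (3 * r) ⊆ P)
    (hP : MeasurableSet P) (hdom : P ⊆ legendreDomain φ) (hint : IntegrableOn (legendre φ) P μ)
    (hφ0 : φ 0 ≤ 0) (x : EuclideanSpace ℝ (Fin n)) :
    r * ‖x‖ - (∫ p in P, legendre φ p ∂μ) / μ.real (ball 0 r) ≤ φ x := by
  set B := ball ((2 * r) • ‖x‖⁻¹ • x) r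
  have hBP : B ⊆ P := (ball_smul_inv_norm_subset hr.le x).trans hball
  have hBvol : μ.real B = μ.real (ball 0 r) := Measure.addHaar_real_ball_center μ _ _
  have hlower : ∀ p ∈ B, r * ‖x‖ - φ x ≤ legendre φ p := fun p hp ↦
    (sub_le_sub_right (mul_norm_le_inner_of_mem_ball hp) _).trans
      (inner_sub_le_legendre (hdom (hBP hp)) x)
  have hnonneg : ∀ p ∈ P, 0 ≤ legendre φ p := fun p hp ↦
    (neg_nonneg.2 hφ0).trans (neg_apply_zero_le_legendre (hdom hp))
  have haverage : (r * ‖x‖ - φ x) * μ.real (ball 0 r) ≤ ∫ p in P, legendre φ p ∂μ :=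
    calc (r * ‖x‖ - φ x) * μ.real (ball 0 r) = (r * ‖x‖ - φ x) * μ.real B := by rw [hBvol]
      _ ≤ ∫ p in B, legendre φ p ∂μ := setIntegral_ge_of_const_le_real measurableSet_ball
          measure_ball_lt_top.ne hlower (hint.mono_set hBP)
      _ ≤ ∫ p in P, legendre φ p ∂μ := setIntegral_mono_set hint
          ((ae_restrict_mem hP).mono hnonneg) (.of_forall hBP)
  have hvol : 0 < μ.real (ball (0 : EuclideanSpace ℝ (Fin n)) r) :=
    measureReal_ball_pos μ hr
  linarith [(le_div_iff₀ hvol).2 haverage]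

end Legendre

theorem statement14_general {n : ℕ} {P : Set (EuclideanSpace ℝ (Fin n))} (hP : MeasurableSet P)
    (hbdd : Bornology.IsBounded P) (h0 : 0 ∈ interior P) {δ : ℝ} (hδ : 0 < δ) :
    ∃ C : ℝ, ∀ φ : EuclideanSpace ℝ (Fin n) → ℝ, AEMeasurable φ →
      (∃ M : ℝ, ∀ x, suppFn P x - M ≤ φ x) → (∀ x, 0 ≤ φ x) → φ 0 = 0 →
      Real.log (∫ x, Real.exp (-φ x)) ≤
        δ / volume.real P * (∫ p in P, legendre φ p) + C := by
  obtain ⟨ε, hε, hball⟩ := Metric.mem_nhds_iff.1 (mem_interior_iff_mem_nhds.1 h0)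
  obtain ⟨r, hr, rfl⟩ : ∃ r, 0 < r ∧ 3 * r = ε := ⟨ε / 3, by positivity, by ring⟩
  set v := volume.real (Metric.ball (0 : EuclideanSpace ℝ (Fin n)) r)
  have hv : 0 < v := measureReal_ball_pos volume hr
  have hPtop : volume P ≠ ⊤ := hbdd.measure_lt_top.ne
  have hV : 0 < volume.real P :=
    ENNReal.toReal_pos (Measure.measure_pos_of_nonempty_interior volume ⟨0, h0⟩).ne' hPtop
  set θ := min 1 (δ / volume.real P * v)
  have hθ : 0 < θ := by positivity
  refine ⟨Real.log (∫ x : EuclideanSpace ℝ (Fin n), Real.exp (-(θ * r * ‖x‖))), ?_⟩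
  rintro φ hφ ⟨M, hM⟩ hnonneg hφ0
  have hinner : ∀ p ∈ P, ∀ x, ⟪p, x⟫_ℝ - φ x ≤ M := fun p ↦
    inner_sub_le_of_suppFn_sub_le hbdd hM
  have hdom : P ⊆ legendreDomain φ := fun p hp ↦ mem_legendreDomain_of_inner_sub_le (hinner p hp)
  have hcoercive := mul_norm_sub_setIntegral_legendre_div_le hr hball hP hdom
    (integrableOn_legendre hP hPtop hinner) hφ0.le
  refine (log_integral_exp_neg_le_of_mul_norm_sub_le volume hφ hr hθ (min_le_left _ _)
    hnonneg hcoercive).trans (add_le_add_left ?_ _)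
  have hI : 0 ≤ ∫ p in P, legendre φ p := setIntegral_nonneg hP fun p hp ↦ by
    simpa only [hφ0, neg_zero] using neg_apply_zero_le_legendre (hdom hp)
  calc θ * ((∫ p in P, legendre φ p) / v)
      ≤ δ / volume.real P * v * ((∫ p in P, legendre φ p) / v) := by
        gcongr
        exact min_le_right _ _
    _ = δ / volume.real P * ∫ p in P, legendre φ p := by field_simp

/-- (Coercive Moser–Trudinger inequality.) For every
`δ ∈ (0,1)` there is `C_δ` such that every normalized convex `φ` (i.e. with
`φ - φ_P` bounded, `φ ≥ 0` and `φ(0) = 0`) satisfies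
`log ∫ e^{-φ} dx ≤ (δ / vol(P)) ∫_P φ* dp + C_δ`. -/
theorem statement14 {n : ℕ} (P : Set (EuclideanSpace ℝ (Fin n)))
    (hPcomp : IsCompact P) (hPconv : Convex ℝ P)
    (h0 : (0 : EuclideanSpace ℝ (Fin n)) ∈ interior P) :
    ∀ δ ∈ Set.Ioo (0 : ℝ) 1, ∃ C : ℝ,
      ∀ φ : EuclideanSpace ℝ (Fin n) → ℝ, ConvexOn ℝ Set.univ φ →
        (∃ M : ℝ, ∀ x, |φ x - suppFn P x| ≤ M) →
        (∀ x, 0 ≤ φ x) → φ 0 = 0 →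
        Real.log (∫ x, Real.exp (-φ x)) ≤
          δ / (volume P).toReal * (∫ p in P, legendre φ p) + C := by
  rintro δ ⟨hδ, -⟩
  obtain ⟨C, hC⟩ := statement14_general hPcomp.measurableSet hPcomp.isBounded h0 hδ
  exact ⟨C, fun φ hφ ⟨M, hM⟩ ↦ hC φ hφ.locallyLipschitz.continuous.aemeasurable
    ⟨M, fun x ↦ by linarith [(abs_le.1 (hM x)).1]⟩⟩
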